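/- (Greedy-optimal policies are optimal in deterministic episodic MDPs.) Let a deterministic MDP be given and assume it is episodic. Then for every greedy-optimal policy π (i.e., π(s) ∈ A*(s) for all s ∈ S) and every pair (s,a) ∈ S × A, the hitting time T(s,a,π) is finite and the return satisfies G(s,a,π) = Q*(s,a); in particular, if a ∈ A*(s) then G(s,a,π) = V*(s). -/

import Mathlib

/-- A deterministic MDP: finite states `S` with terminal state `t`, actions `A`,
deterministic transition function `g`, reward function `r`, and discount `γ ∈ (0,1]`.
The terminal state is absorbing with zero reward. -/
structure DetMDP (S A : Type) where
  t : S
  g : S → A → S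
  r : S → A → ℝ
  γ : ℝ
  γ_pos : 0 < γ
  γ_le_one : γ ≤ 1
  g_t : ∀ a, g t a = t
  r_t : ∀ a, r t a = 0

namespace DetMDP

variable {S A : Type}

/-- The trajectory of (state, action) pairs starting from `(s, a)` and thereafter
following policy `π`: `s_0 = s`, `a_0 = a`, `s_{u+1} = g s_u a_u`, `a_{u+1} = π s_{u+1}`. -/
def traj (M : DetMDP S A) (π : S → A) (s : S) (a : A) : ℕ → S × A
  | 0 => (s, a)
  | u + 1 =>
    let p := traj M π s a u
    let s' := M.g p.1 p.2
    (s', π s')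

/-- The trajectory from `(s,a)` under `π` eventually hits the terminal state. -/
def Terminates (M : DetMDP S A) (π : S → A) (s : S) (a : A) : Prop :=
  ∃ u, (M.traj π s a u).1 = M.t

/-- The hitting time `T(s,a,π)`: the least `u` with `s_u = t`
(junk value `0` when the trajectory never terminates). -/
noncomputable def hit (M : DetMDP S A) (π : S → A) (s : S) (a : A) : ℕ :=
  sInf {u | (M.traj π s a u).1 = M.t}

/-- The episodic return `G(s,a,π) = Σ_{u=0}^{T-1} γ^u r(s_u, a_u)`. -/
noncomputable def ret (M : DetMDP S A) (π : S → A) (s : S) (a : A) : ℝ :=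
  ∑ u ∈ Finset.range (M.hit π s a),
    M.γ ^ u * M.r (M.traj π s a u).1 (M.traj π s a u).2

/-- The optimal action-value function `Q*(s,a)`: the maximum of `G(s,a,π)` over the
(finitely many) policies `π` that terminate from `(s,a)`. -/
noncomputable def Qstar (M : DetMDP S A) (s : S) (a : A) : ℝ :=
  sSup {x | ∃ π : S → A, M.Terminates π s a ∧ M.ret π s a = x}

/-- The optimal value function `V*(s) = max_a Q*(s,a)`. -/
noncomputable def Vstar (M : DetMDP S A) (s : S) : ℝ :=
  sSup {x | ∃ a : A, M.Qstar s a = x}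

/-- The set of optimal actions `A*(s)`. -/
def Astar (M : DetMDP S A) (s : S) : Set A :=
  {a | M.Qstar s a = M.Vstar s}

/-- A policy is greedy-optimal if it selects an optimal action in every state. -/
def GreedyOpt (M : DetMDP S A) (π : S → A) : Prop :=
  ∀ s, π s ∈ M.Astar s

/-- The MDP is episodic: every greedy-optimal policy terminates from every start pair. -/
def Episodic (M : DetMDP S A) : Prop :=
  ∀ π : S → A, M.GreedyOpt π → ∀ s a, M.Terminates π s a

end DetMDP

namespace DetMDP

variable {S A : Type}

lemma traj_shift (M : DetMDP S A) (π : S → A) (s : S) (a : A) (u : ℕ) :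
    M.traj π s a (u + 1) = M.traj π (M.g s a) (π (M.g s a)) u := by
  induction u with
  | zero => rfl
  | succ u ih =>
    rw [traj, ih]
    rfl

lemma ret_t (M : DetMDP S A) (π : S → A) (a : A) : M.ret π M.t a = 0 := by
  have : M.hit π M.t a = 0 := by
    unfold hit
    rw [Nat.sInf_eq_zero]
    left
    rfl
  simp [ret, this]

lemma terminates_step (M : DetMDP S A) (π : S → A) (s : S) (a : A) (hs : s ≠ M.t)
    (h : M.Terminates π s a) : M.Terminates π (M.g s a) (π (M.g s a)) := by
  obtain ⟨u, hu⟩ := h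
  cases u with
  | zero => exact absurd hu hs
  | succ u => exact ⟨u, by rw [← traj_shift]; exact hu⟩

lemma hit_step (M : DetMDP S A) (π : S → A) (s : S) (a : A) (hs : s ≠ M.t)
    (h : M.Terminates π s a) :
    M.hit π s a = M.hit π (M.g s a) (π (M.g s a)) + 1 := by
  have h' := M.terminates_step π s a hs h
  apply le_antisymm
  · apply Nat.sInf_le
    have := Nat.sInf_mem (s := {u | (M.traj π (M.g s a) (π (M.g s a)) u).1 = M.t}) h'
    show (M.traj π s a (_ + 1)).1 = M.t
    rw [traj_shift]
    exact this
  · have hm : (M.traj π s a (M.hit π s a)).1 = M.t :=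
      Nat.sInf_mem (s := {u | (M.traj π s a u).1 = M.t}) h
    cases hh : M.hit π s a with
    | zero =>
      rw [hh] at hm
      exact absurd hm hs
    | succ n =>
      rw [hh, traj_shift] at hm
      exact Nat.succ_le_succ (Nat.sInf_le hm)

lemma ret_step (M : DetMDP S A) (π : S → A) (s : S) (a : A) (hs : s ≠ M.t)
    (h : M.Terminates π s a) :
    M.ret π s a = M.r s a + M.γ * M.ret π (M.g s a) (π (M.g s a)) := by
  unfold ret
  rw [M.hit_step π s a hs h, Finset.sum_range_succ', Finset.mul_sum, add_comm]
  congr 1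
  · simp [traj]
  · apply Finset.sum_congr rfl
    intro u _
    rw [traj_shift]
    ring

lemma ret_le_Qstar [Finite S] [Finite A] (M : DetMDP S A) (π : S → A) (s : S) (a : A)
    (h : M.Terminates π s a) : M.ret π s a ≤ M.Qstar s a := by
  apply le_csSup
  · apply Set.Finite.bddAbove
    apply (Set.finite_range (fun π : S → A => M.ret π s a)).subset
    rintro x ⟨ρ, _, rfl⟩
    exact ⟨ρ, rfl⟩
  · exact ⟨π, h, rfl⟩

lemma Qstar_le_Vstar [Finite A] (M : DetMDP S A) (s : S) (a : A) :
    M.Qstar s a ≤ M.Vstar s :=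
  le_csSup (Set.finite_range (fun a : A => M.Qstar s a)).bddAbove ⟨a, rfl⟩

lemma ret_eq_Qstar [Finite S] [Finite A] (M : DetMDP S A) (π : S → A) (hπ : M.GreedyOpt π)
    (n : ℕ) : ∀ (s : S) (a : A), (M.traj π s a n).1 = M.t → M.ret π s a = M.Qstar s a := by
  induction n with
  | zero =>
    intro s a h
    have hs : s = M.t := h
    subst hs
    apply le_antisymm
    · exact M.ret_le_Qstar π _ a ⟨0, rfl⟩
    · apply csSup_le
      · exact ⟨_, π, ⟨0, rfl⟩, rfl⟩
      · rintro x ⟨ρ, _, rfl⟩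
        rw [ret_t, ret_t]
  | succ n ih =>
    intro s a h
    have hT : M.Terminates π s a := ⟨_, h⟩
    apply le_antisymm
    · exact M.ret_le_Qstar π _ a hT
    · apply csSup_le
      · exact ⟨_, π, hT, rfl⟩
      · rintro x ⟨ρ, hρ, rfl⟩
        by_cases hs : s = M.t
        · subst hs
          rw [ret_t, ret_t]
        · rw [M.ret_step ρ s a hs hρ, M.ret_step π s a hs hT]
          rw [traj_shift] at h
          have h1 : M.ret π (M.g s a) (π (M.g s a)) = M.Vstar (M.g s a) :=
            (ih _ _ h).trans (hπ _)
          have h2 := M.ret_le_Qstar ρ _ _ (M.terminates_step ρ s a hs hρ)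
          have h3 := M.Qstar_le_Vstar (M.g s a) (ρ (M.g s a))
          have h4 := mul_le_mul_of_nonneg_left (h2.trans h3) M.γ_pos.le
          rw [h1]
          linarith

end DetMDP

/-- In a deterministic episodic MDP, every greedy-optimal policy is
optimal: for every start pair `(s,a)` it terminates and its return equals `Q*(s,a)`;
in particular it attains `V*(s)` when `a ∈ A*(s)`. -/
theorem greedyOpt_policies_are_optimal
    {S A : Type} [Fintype S] [Fintype A] [Nonempty A]
    (M : DetMDP S A)
    (hterm : ∀ (s : S) (a : A), ∃ π : S → A, M.Terminates π s a)
    (heps : M.Episodic) :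
    ∀ π : S → A, M.GreedyOpt π → ∀ (s : S) (a : A),
      M.Terminates π s a ∧ M.ret π s a = M.Qstar s a ∧
        (a ∈ M.Astar s → M.ret π s a = M.Vstar s) := by
  intro π hπ s a
  have hT := heps π hπ s a
  obtain ⟨n, hn⟩ := hT
  have h := M.ret_eq_Qstar π hπ n s a hn
  exact ⟨⟨n, hn⟩, h, fun ha => h.trans ha⟩
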